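/- Symmetry for the critical system with absorption: Let α ∈ (0,2), n > α, p, s > 1, κ₁, κ₂ > 0, and let (u,v) ∈ (L_α ∩ C^{1,1}_{loc}(ℝ^n))² be a positive solution of (−Δ)^{α/2}u = v^{(n+α)/(n−α)} − κ₁u^p, (−Δ)^{α/2}v = u^{(n+α)/(n−α)} − κ₂v^s on ℝ^n. If u(x) ≲ |x|^{−(n−α)} and v(x) ≲ |x|^{−(n−α)} as |x| → ∞, then u and v are radially symmetric about a common point x₀ ∈ ℝ^n. -/

import Mathlib

open Set MeasureTheory Filter

/-- `F x` is the value of the principal-value fractional Laplacian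
`(−Δ)^{α/2} u` (with normalizing constant `C`) at every point `x`. -/
def IsFracLap (n : ℕ) (α C : ℝ) (u F : EuclideanSpace ℝ (Fin n) → ℝ) : Prop :=
  ∀ x, Tendsto
    (fun ε : ℝ => C * ∫ y in {y : EuclideanSpace ℝ (Fin n) | ε ≤ dist x y},
      (u x - u y) / dist x y ^ ((n : ℝ) + α))
    (nhdsWithin 0 (Ioi 0)) (nhds (F x))

/-- Membership in the space `L_α`. -/
def MemLalpha (n : ℕ) (α : ℝ) (u : EuclideanSpace ℝ (Fin n) → ℝ) : Prop :=
  Integrable (fun x : EuclideanSpace ℝ (Fin n) => |u x| / (1 + ‖x‖ ^ ((n : ℝ) + α)))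

/-- `C^{1,1}_{loc}` regularity: `C¹` with locally Lipschitz derivative. -/
def C11loc {n : ℕ} (u : EuclideanSpace ℝ (Fin n) → ℝ) : Prop :=
  ContDiff ℝ 1 u ∧ LocallyLipschitz (fderiv ℝ u)


namespace MP
variable {n : ℕ}

/-- reflection across the hyperplane `⟪e, y⟫ = l`. -/
noncomputable def rho (e : EuclideanSpace ℝ (Fin n)) (l : ℝ) (y : EuclideanSpace ℝ (Fin n)) :
    EuclideanSpace ℝ (Fin n) := y + (2 * (l - inner ℝ e y)) • e

lemma inner_rho {e : EuclideanSpace ℝ (Fin n)} (he : ‖e‖ = 1) (l : ℝ) (y) :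
    inner ℝ e (rho e l y) = 2 * l - inner ℝ e y := by
  simp only [rho, inner_add_right, inner_smul_right, real_inner_self_eq_norm_sq, he]; ring

lemma rho_rho {e : EuclideanSpace ℝ (Fin n)} (he : ‖e‖ = 1) (l : ℝ) (y) :
    rho e l (rho e l y) = y := by
  conv_lhs => rw [rho, inner_rho he]
  rw [rho, add_assoc, ← add_smul]
  have : 2 * (l - inner ℝ e y) + 2 * (l - (2 * l - inner ℝ e y)) = 0 := by ring
  rw [this]; simp

lemma dist_sq_rho {e : EuclideanSpace ℝ (Fin n)} (he : ‖e‖ = 1) (l : ℝ) (x y) :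
    dist x (rho e l y) ^ 2 = dist x y ^ 2 + 4 * (l - inner ℝ e x) * (l - inner ℝ e y) := by
  have : x - rho e l y = (x - y) - (2 * (l - inner ℝ e y)) • e := by simp [rho, sub_sub]
  rw [dist_eq_norm, dist_eq_norm, this, norm_sub_sq_real, inner_smul_right, norm_smul, he,
    real_inner_comm e (x - y), inner_sub_right, mul_one, Real.norm_eq_abs, sq_abs]
  ring

lemma dist_rho_rho {e : EuclideanSpace ℝ (Fin n)} (he : ‖e‖ = 1) (l : ℝ) (x y) :
    dist (rho e l x) (rho e l y) = dist x y := by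
  have h1 := dist_sq_rho he l (rho e l x) y
  have h2 := dist_sq_rho he l y x
  rw [inner_rho he, dist_comm _ y, h2] at h1
  have : dist (rho e l x) (rho e l y) ^ 2 = dist x y ^ 2 := by rw [h1, dist_comm y x]; ring
  exact (pow_left_inj₀ dist_nonneg dist_nonneg two_ne_zero).1 this

lemma dist_rho_comm {e : EuclideanSpace ℝ (Fin n)} (he : ‖e‖ = 1) (l : ℝ) (x y) :
    dist (rho e l x) y = dist x (rho e l y) := by
  rw [← dist_rho_rho he l, rho_rho he]

lemma continuous_rho2 (e : EuclideanSpace ℝ (Fin n)) :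
    Continuous (fun z : ℝ × EuclideanSpace ℝ (Fin n) => rho e z.1 z.2) := by
  unfold rho; fun_prop

lemma continuous_rho (e : EuclideanSpace ℝ (Fin n)) (l : ℝ) : Continuous (rho e l) := by
  unfold rho; fun_prop

lemma mp_rho {e : EuclideanSpace ℝ (Fin n)} (he : ‖e‖ = 1) (l : ℝ) :
    MeasurePreserving (rho e l) volume volume := by
  let T : EuclideanSpace ℝ (Fin n) ≃ᵢ EuclideanSpace ℝ (Fin n) :=
    { toFun := rho e l, invFun := rho e l, left_inv := rho_rho he l, right_inv := rho_rho he l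
      isometry_toFun := Isometry.of_dist_eq (dist_rho_rho he l) }
  have h1 : ∀ y, rho e l y = (ℝ ∙ e)ᗮ.reflection y + (2 * l) • e := by
    intro y
    rw [Submodule.reflection_orthogonal_apply, Submodule.reflection_singleton_apply]
    simp [rho, he]
    module
  have h2 : rho e l = (fun z => z + (2 * l) • e) ∘ ((ℝ ∙ e)ᗮ.reflection) := by
    ext1 y; exact h1 y
  rw [h2]
  exact (measurePreserving_add_right volume _).comp (LinearIsometryEquiv.measurePreserving _)

lemma integral_rho {e : EuclideanSpace ℝ (Fin n)} (he : ‖e‖ = 1) (l : ℝ)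
    (g : EuclideanSpace ℝ (Fin n) → ℝ) : ∫ y, g (rho e l y) = ∫ y, g y := by
  refine (mp_rho he l).integral_comp ?_ g
  exact (Homeomorph.mk ⟨rho e l, rho e l, rho_rho he l, rho_rho he l⟩ (continuous_rho e l)
    (continuous_rho e l)).measurableEmbedding

lemma integrable_rho {e : EuclideanSpace ℝ (Fin n)} (he : ‖e‖ = 1) (l : ℝ)
    {g : EuclideanSpace ℝ (Fin n) → ℝ} (hg : Integrable g) : Integrable (fun y => g (rho e l y)) :=
  (mp_rho he l).integrable_comp_of_integrable hg

/-- the truncated integrand is integrable. -/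
lemma integrable_trunc {α : ℝ} (hα : 0 < α) {W : EuclideanSpace ℝ (Fin n) → ℝ}
    (hW : Continuous W) {M : ℝ} (hM : ∀ y, |W y| ≤ M) (x : EuclideanSpace ℝ (Fin n)) {ε : ℝ}
    (hε : 0 < ε) :
    Integrable ({y | ε ≤ dist x y}.indicator
      (fun y => (W x - W y) / dist x y ^ ((n : ℝ) + α))) := by
  have hms : MeasurableSet {y : EuclideanSpace ℝ (Fin n) | ε ≤ dist x y} :=
    (isClosed_le continuous_const (by fun_prop)).measurableSet
  have h0 : Integrable (fun y : EuclideanSpace ℝ (Fin n) => (1 + ‖y‖) ^ (-((n : ℝ) + α))) :=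
    integrable_one_add_norm (by simp [hα])
  have h1 : Integrable (fun y : EuclideanSpace ℝ (Fin n) =>
      (2 * M * ((1 + ε) / ε) ^ ((n : ℝ) + α)) * (1 + ‖y - x‖) ^ (-((n : ℝ) + α))) :=
    (h0.comp_sub_right x).const_mul _
  refine h1.mono' ?_ ?_
  · refine AEStronglyMeasurable.indicator ?_ hms
    refine Measurable.aestronglyMeasurable ?_
    have := hW.measurable
    fun_prop
  · refine Eventually.of_forall fun y => ?_
    have hM0 : 0 ≤ M := (abs_nonneg _).trans (hM x)
    by_cases hy : ε ≤ dist x y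
    · rw [indicator_of_mem (by exact hy), norm_div, Real.norm_eq_abs, Real.norm_eq_abs]
      have hd : 0 < dist x y := hε.trans_le hy
      rw [abs_of_nonneg (Real.rpow_nonneg hd.le _), ← dist_eq_norm, dist_comm y x,
        Real.rpow_neg (by positivity), mul_assoc, div_eq_mul_inv]
      gcongr
      · have a1 := hM x
        have a2 := hM y
        rw [abs_le] at *
        constructor <;> linarith
      · rw [← Real.inv_rpow hd.le, ← Real.inv_rpow (by positivity),
          ← Real.mul_rpow (by positivity) (by positivity)]
        apply Real.rpow_le_rpow (by positivity) _ (by positivity)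
        rw [← div_eq_mul_inv, div_div, inv_eq_one_div, div_le_div_iff₀ hd (by positivity)]
        nlinarith
    · rw [indicator_of_notMem (by exact hy)]
      simp only [norm_zero]
      positivity

lemma vol_ball [NeZero n] (x : EuclideanSpace ℝ (Fin n)) {r : ℝ} (hr : 0 ≤ r) :
    volume.real (Metric.ball x r) =
      r ^ n * volume.real (Metric.ball (0 : EuclideanSpace ℝ (Fin n)) 1) := by
  rw [measureReal_def, measureReal_def, Measure.addHaar_ball _ _ hr, ENNReal.toReal_mul,
    ENNReal.toReal_ofReal (pow_nonneg hr _)]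
  simp

lemma max_principle [NeZero n] {α C : ℝ} (hα : 0 < α) (hC : 0 < C)
    {e : EuclideanSpace ℝ (Fin n)} (he : ‖e‖ = 1) (l : ℝ)
    {W : EuclideanSpace ℝ (Fin n) → ℝ} (hW : Continuous W) {M : ℝ} (hM : ∀ y, |W y| ≤ M)
    (hanti : ∀ y, W (rho e l y) = - W y) {x : EuclideanSpace ℝ (Fin n)} {F : ℝ}
    (hF : Tendsto (fun ε : ℝ => C * ∫ y in {y : EuclideanSpace ℝ (Fin n) | ε ≤ dist x y},
      (W x - W y) / dist x y ^ ((n : ℝ) + α)) (nhdsWithin 0 (Ioi 0)) (nhds F))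
    (hx : inner ℝ e x < l) (hx0 : W x ≤ 0) (hmin : ∀ y, inner ℝ e y ≤ l → W x ≤ W y)
    {B : Set (EuclideanSpace ℝ (Fin n))} (hB : MeasurableSet B) (hBf : volume B ≠ ⊤)
    (hBl : ∀ y ∈ B, inner ℝ e y < l) {r : ℝ} (hr : 0 < r) (hBr : ∀ y ∈ B, r ≤ dist x y)
    {h : ℝ} (hh : ∀ y ∈ B, h ≤ (W y - W x) * (1 / dist x y ^ ((n : ℝ) + α)
      - 1 / dist x (rho e l y) ^ ((n : ℝ) + α)) - 2 * W x / dist x (rho e l y) ^ ((n : ℝ) + α)) :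
    F ≤ - (C * h * volume.real B) := by
  set a := (n : ℝ) + α with ha
  have ha0 : 0 < a := by positivity
  have hM0 : 0 ≤ M := (abs_nonneg _).trans (hM x)
  set d := l - inner ℝ e x with hd
  have hd0 : 0 < d := by linarith
  set N := 2 * M / d ^ a with hN
  have hN0 : 0 ≤ N := by positivity
  -- distance facts
  have hdist : ∀ y, inner ℝ e y ≤ l → d ≤ dist x (rho e l y) := by
    intro y hy
    have h1 : inner ℝ e (rho e l y - x) ≤ ‖e‖ * ‖rho e l y - x‖ := real_inner_le_norm _ _
    rw [he, one_mul, ← dist_eq_norm, dist_comm, inner_sub_right, inner_rho he] at h1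
    linarith
  have hdist2 : ∀ y, inner ℝ e y ≤ l → dist x y ≤ dist x (rho e l y) := by
    intro y hy
    have := dist_sq_rho he l x y
    have h3 : 0 ≤ (l - inner ℝ e x) * (l - inner ℝ e y) := mul_nonneg (by linarith) (by linarith)
    exact (pow_le_pow_iff_left₀ dist_nonneg dist_nonneg two_ne_zero).1 (by nlinarith)
  -- key bound
  have key : ∀ ε, 0 < ε → ε < d → ε < r → C * ∫ y in {y : EuclideanSpace ℝ (Fin n) | ε ≤ dist x y},
      (W x - W y) / dist x y ^ a ≤ C * (- h * volume.real B + N * volume.real (Metric.ball x ε)) := by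
    intro ε hε hεd hεr
    have hms : MeasurableSet {y : EuclideanSpace ℝ (Fin n) | ε ≤ dist x y} :=
      (isClosed_le continuous_const (by fun_prop)).measurableSet
    rw [← integral_indicator hms]
    have hgi := integrable_trunc hα hW hM x hε
    rw [← ha] at hgi
    set g := {y | ε ≤ dist x y}.indicator (fun y => (W x - W y) / dist x y ^ a) with hg
    set b : EuclideanSpace ℝ (Fin n) → ℝ := fun y =>
      B.indicator (fun _ => -h) y + (Metric.ball x ε).indicator (fun _ => N) y with hb
    have hbi1 : Integrable (B.indicator (fun _ : EuclideanSpace ℝ (Fin n) => -h)) :=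
      (integrable_indicator_iff hB).2 (integrableOn_const hBf)
    have hbi2 : Integrable ((Metric.ball x ε).indicator (fun _ => N)) :=
      (integrable_indicator_iff Metric.isOpen_ball.measurableSet).2
        (integrableOn_const measure_ball_lt_top.ne)
    have hbi : Integrable b := hbi1.add hbi2
    have hbint : ∫ y, b y = - h * volume.real B + N * volume.real (Metric.ball x ε) := by
      rw [hb, integral_add hbi1 hbi2, integral_indicator hB,
        integral_indicator Metric.isOpen_ball.measurableSet, setIntegral_const, setIntegral_const]
      simp only [smul_eq_mul]; ring
    have half : ∀ y, inner ℝ e y ≤ l → g y + g (rho e l y) ≤ b y + b (rho e l y) := by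
      intro y hy
      have h1 := hdist y hy
      have h2 := hdist2 y hy
      have hbr : 0 ≤ b (rho e l y) := by
        have : rho e l y ∉ B := fun hc => by
          have := hBl _ hc
          rw [inner_rho he] at this
          linarith
        simp only [hb, indicator_of_notMem this, zero_add]
        exact indicator_nonneg (fun _ _ => hN0) _
      have hgr : g (rho e l y) = (W x + W y) / dist x (rho e l y) ^ a := by
        rw [hg, indicator_of_mem (by show ε ≤ _; linarith), hanti]; ring
      have hpos : 0 < dist x (rho e l y) := by linarith
      refine le_trans ?_ (le_add_of_nonneg_right hbr)
      rw [hgr]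
      by_cases hye : ε ≤ dist x y
      · have hgy : g y = (W x - W y) / dist x y ^ a := by
          rw [hg, indicator_of_mem (by exact hye)]
        have hb2 : y ∉ Metric.ball x ε := by
          rw [Metric.mem_ball, dist_comm]; linarith
        have e1 : (W x - W y) / dist x y ^ a + (W x + W y) / dist x (rho e l y) ^ a =
          - ((W y - W x) * (1 / dist x y ^ a
            - 1 / dist x (rho e l y) ^ a) - 2 * W x / dist x (rho e l y) ^ a) := by ring
        rw [hgy, e1]
        by_cases hyB : y ∈ B
        · simp only [hb, indicator_of_mem hyB, indicator_of_notMem hb2, add_zero]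
          linarith [hh y hyB]
        · simp only [hb, indicator_of_notMem hyB, indicator_of_notMem hb2, add_zero]
          have p1 : 0 ≤ W y - W x := by linarith [hmin y hy]
          have p2 : 0 ≤ 1 / dist x y ^ a - 1 / dist x (rho e l y) ^ a := by
            rw [sub_nonneg]
            have : 0 < dist x y := by linarith
            apply one_div_le_one_div_of_le (by positivity)
            exact Real.rpow_le_rpow dist_nonneg h2 ha0.le
          have p3 : 2 * W x / dist x (rho e l y) ^ a ≤ 0 :=
            div_nonpos_of_nonpos_of_nonneg (by linarith) (by positivity)
          nlinarith [mul_nonneg p1 p2]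
      · have hgy : g y = 0 := by rw [hg, indicator_of_notMem (by exact hye)]
        push Not at hye
        have hb2 : y ∈ Metric.ball x ε := by
          rw [Metric.mem_ball, dist_comm]; linarith
        have hyB : y ∉ B := fun hc => by linarith [hBr y hc]
        simp only [hb, indicator_of_notMem hyB, indicator_of_mem hb2, hgy, zero_add, hN]
        apply div_le_div₀ (by positivity) _ (by positivity)
        · exact Real.rpow_le_rpow hd0.le h1 ha0.le
        · linarith [le_of_abs_le (hM x), le_of_abs_le (hM y)]
    have full : ∀ y, g y + g (rho e l y) ≤ b y + b (rho e l y) := by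
      intro y
      rcases le_total (inner ℝ e y) l with hy | hy
      · exact half y hy
      · have := half (rho e l y) (by rw [inner_rho he]; linarith)
        rw [rho_rho he] at this
        linarith
    have hI : ∫ y, (g y + g (rho e l y)) ≤ ∫ y, (b y + b (rho e l y)) :=
      integral_mono (hgi.add (integrable_rho he l hgi)) (hbi.add (integrable_rho he l hbi)) full
    rw [integral_add hgi (integrable_rho he l hgi), integral_add hbi (integrable_rho he l hbi),
      integral_rho he l g, integral_rho he l b, hbint] at hI
    exact mul_le_mul_of_nonneg_left (by linarith) hC.le
  have hlim : Tendsto (fun ε : ℝ => C * (- h * volume.real B + N * volume.real (Metric.ball x ε)))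
      (nhdsWithin 0 (Ioi 0)) (nhds (C * (- h * volume.real B + N * 0))) := by
    refine (Tendsto.const_add _ (Tendsto.const_mul _ ?_)).const_mul _
    have e1 : Tendsto (fun ε : ℝ => ε ^ n * volume.real (Metric.ball (0 : EuclideanSpace ℝ (Fin n)) 1))
        (nhdsWithin 0 (Ioi 0)) (nhds 0) := by
      have : Continuous (fun ε : ℝ => ε ^ n *
        volume.real (Metric.ball (0 : EuclideanSpace ℝ (Fin n)) 1)) := by fun_prop
      have h2 := this.tendsto 0
      simp only [zero_pow (NeZero.ne n), zero_mul] at h2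
      exact h2.mono_left nhdsWithin_le_nhds
    refine e1.congr' ?_
    filter_upwards [self_mem_nhdsWithin] with ε hε
    exact (vol_ball x (le_of_lt hε)).symm
  have := le_of_tendsto_of_tendsto hF hlim (by
    filter_upwards [self_mem_nhdsWithin, nhdsWithin_le_nhds (Iio_mem_nhds hd0),
      nhdsWithin_le_nhds (Iio_mem_nhds hr)] with ε h1 h2 h3
    exact key ε h1 h2 h3)
  linarith

end MP

namespace MP
variable {n : ℕ}

lemma fraclap_diff {α C : ℝ} (hα : 0 < α)
    {e : EuclideanSpace ℝ (Fin n)} (he : ‖e‖ = 1) (l : ℝ)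
    {u F : EuclideanSpace ℝ (Fin n) → ℝ} (hu : Continuous u) {M : ℝ} (hM : ∀ y, |u y| ≤ M)
    (hF : IsFracLap n α C u F) (x : EuclideanSpace ℝ (Fin n)) :
    Tendsto (fun ε : ℝ => C * ∫ y in {y : EuclideanSpace ℝ (Fin n) | ε ≤ dist x y},
      ((u (rho e l x) - u x) - (u (rho e l y) - u y)) / dist x y ^ ((n : ℝ) + α))
      (nhdsWithin 0 (Ioi 0)) (nhds (F (rho e l x) - F x)) := by
  refine ((hF (rho e l x)).sub (hF x)).congr' ?_
  filter_upwards [self_mem_nhdsWithin] with ε hε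
  have hms : ∀ x, MeasurableSet {y : EuclideanSpace ℝ (Fin n) | ε ≤ dist x y} := fun x =>
    (isClosed_le continuous_const (by fun_prop)).measurableSet
  have i1 := integrable_trunc hα hu hM x hε
  have i2 := integrable_trunc hα hu hM (rho e l x) hε
  rw [← mul_sub, ← integral_indicator (hms _), ← integral_indicator (hms _),
    ← integral_indicator (hms _), ← integral_rho he l, ← integral_sub (integrable_rho he l i2) i1]
  congr 1
  congr 1
  ext y
  by_cases hy : ε ≤ dist x y
  · rw [indicator_of_mem (by simpa [dist_rho_rho he] using hy), indicator_of_mem (by exact hy),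
      indicator_of_mem (by exact hy), dist_rho_rho he]
    ring
  · rw [indicator_of_notMem (by simpa [dist_rho_rho he] using hy),
      indicator_of_notMem (by exact hy), indicator_of_notMem (by exact hy)]
    ring

lemma tangent {q a b : ℝ} (hq : 1 ≤ q) (ha : 0 < a) (hb : 0 < b) :
    q * b ^ (q - 1) * (a - b) ≤ a ^ q - b ^ q := by
  have h1 := one_add_mul_self_le_rpow_one_add (s := a / b - 1) (by
    have : 0 < a / b := by positivity
    linarith) hq
  have h2 : 1 + (a / b - 1) = a / b := by ring
  rw [h2, Real.div_rpow ha.le hb.le, le_div_iff₀ (by positivity)] at h1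
  have h3 : b ^ q = b ^ (q - 1) * b := by
    rw [← Real.rpow_add_one hb.ne']; ring_nf
  have h4 : (1 + q * (a / b - 1)) * b ^ q = b ^ q + q * b ^ (q - 1) * (a - b) := by
    rw [h3]; field_simp
  linarith

/-- the constant in the decay estimate -/
noncomputable def c0 (n : ℕ) (α C : ℝ) : ℝ :=
  2 * C * volume.real (Metric.ball (0 : EuclideanSpace ℝ (Fin n)) 1) * (1 / 2) ^ n
    / 4 ^ ((n : ℝ) + α)

lemma vol_pos : 0 < volume.real (Metric.ball (0 : EuclideanSpace ℝ (Fin n)) 1) :=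
  ENNReal.toReal_pos (Metric.measure_ball_pos _ _ one_pos).ne' measure_ball_lt_top.ne

lemma c0_pos {α C : ℝ} (hC : 0 < C) : 0 < c0 n α C := by
  have := vol_pos (n := n)
  unfold c0; positivity

lemma abs_diff_le {u : EuclideanSpace ℝ (Fin n) → ℝ} {M : ℝ} (hM : ∀ y, |u y| ≤ M) (y z) :
    |u z - u y| ≤ 2 * M := by
  have a1 := hM z
  have a2 := hM y
  rw [abs_le] at *
  constructor <;> linarith

lemma neg_min_bound [NeZero n] {α C p q κ : ℝ} (hα : 0 < α) (hC : 0 < C) (hp : 1 < p) (hq : 1 ≤ q)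
    (hκ : 0 < κ) {e : EuclideanSpace ℝ (Fin n)} (he : ‖e‖ = 1) (l : ℝ)
    {u v : EuclideanSpace ℝ (Fin n) → ℝ} (hu : Continuous u) {M : ℝ} (hM : ∀ y, |u y| ≤ M)
    (hupos : ∀ x, 0 < u x) (hvpos : ∀ x, 0 < v x)
    (hequ : IsFracLap n α C u (fun x => v x ^ q - κ * u x ^ p))
    {x : EuclideanSpace ℝ (Fin n)} (hx : inner ℝ e x < l)
    (hneg : u (rho e l x) - u x < 0) (hUV : u (rho e l x) - u x ≤ v (rho e l x) - v x)
    (hmin : ∀ y, inner ℝ e y ≤ l → u (rho e l x) - u x ≤ u (rho e l y) - u y) :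
    c0 n α C * (l - inner ℝ e x) ^ (-α) ≤ q * v x ^ (q - 1) := by
  have hF := fraclap_diff hα he l hu hM hequ x
  set d := l - inner ℝ e x with hd
  have hd0 : 0 < d := by linarith
  set W : EuclideanSpace ℝ (Fin n) → ℝ := fun y => u (rho e l y) - u y with hW
  have hWc : Continuous W := by
    have := continuous_rho e l
    fun_prop
  set c := x - d • e with hc
  have hρc : rho e l c = x + (3 * d) • e := by
    have : 2 * (l - inner ℝ e c) = 4 * d := by
      rw [hc, inner_sub_right, inner_smul_right, real_inner_self_eq_norm_sq, he]; linarith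
    rw [rho, this, hc]; module
  have hxc : dist x c = d := by
    rw [dist_eq_norm, hc, sub_sub_cancel, norm_smul, he, Real.norm_of_nonneg hd0.le, mul_one]
  have hxρc : dist x (rho e l c) = 3 * d := by
    rw [hρc, dist_eq_norm, sub_add_cancel_left, norm_neg, norm_smul, he,
      Real.norm_of_nonneg (by positivity), mul_one]
  have hBl : ∀ y ∈ Metric.ball c (d / 2), inner ℝ e y < l := by
    intro y hy
    have h1 : inner ℝ e (y - c) ≤ ‖e‖ * ‖y - c‖ := real_inner_le_norm _ _
    rw [he, one_mul, ← dist_eq_norm, inner_sub_right, hc, inner_sub_right, inner_smul_right,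
      real_inner_self_eq_norm_sq, he, ← hc] at h1
    have := Metric.mem_ball.1 hy
    linarith
  have hBr : ∀ y ∈ Metric.ball c (d / 2), d / 2 ≤ dist x y := by
    intro y hy
    have := Metric.mem_ball.1 hy
    have := dist_triangle x y c
    linarith
  have hmp := max_principle hα hC he l hWc (abs_diff_le hM · _) (by
      intro y; simp only [hW, rho_rho he]; ring) hF hx hneg.le hmin
      (B := Metric.ball c (d / 2)) Metric.isOpen_ball.measurableSet measure_ball_lt_top.ne hBl
      (half_pos hd0) hBr (h := - 2 * W x / (4 * d) ^ ((n : ℝ) + α)) (by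
      intro y hy
      have hyl := (hBl y hy).le
      have hy2 := hBr y hy
      have hy1 := Metric.mem_ball.1 hy
      have t1 : dist x y ≤ dist x (rho e l y) := by
        have := dist_sq_rho he l x y
        have h3 : 0 ≤ (l - inner ℝ e x) * (l - inner ℝ e y) :=
          mul_nonneg (by linarith) (by linarith)
        exact (pow_le_pow_iff_left₀ dist_nonneg dist_nonneg two_ne_zero).1 (by nlinarith)
      have t2 : dist x (rho e l y) ≤ 4 * d := by
        have := dist_triangle x (rho e l c) (rho e l y)
        rw [hxρc, dist_rho_rho he, dist_comm c y] at this
        linarith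
      have t0 : 0 < dist x y := by linarith
      have t3 : 0 < dist x (rho e l y) := by linarith
      have p2 : 0 ≤ 1 / dist x y ^ ((n : ℝ) + α) - 1 / dist x (rho e l y) ^ ((n : ℝ) + α) := by
        rw [sub_nonneg]
        apply one_div_le_one_div_of_le (by positivity)
        exact Real.rpow_le_rpow dist_nonneg t1 (by positivity)
      have p1 : 0 ≤ W y - W x := by linarith [hmin y hyl]
      have p3 : - 2 * W x / (4 * d) ^ ((n : ℝ) + α) ≤
          - 2 * W x / dist x (rho e l y) ^ ((n : ℝ) + α) := by
        apply div_le_div_of_nonneg_left _ (by positivity)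
        · exact Real.rpow_le_rpow dist_nonneg t2 (by positivity)
        · have : W x < 0 := hneg
          linarith
      have e2 : - 2 * W x / dist x (rho e l y) ^ ((n : ℝ) + α) =
        - (2 * W x / dist x (rho e l y) ^ ((n : ℝ) + α)) := by ring
      nlinarith [mul_nonneg p1 p2])
  rw [vol_ball _ (half_pos hd0).le] at hmp
  have hcc : C * (- 2 * W x / (4 * d) ^ ((n : ℝ) + α)) * ((d / 2) ^ n *
      volume.real (Metric.ball (0 : EuclideanSpace ℝ (Fin n)) 1)) =
      - W x * (c0 n α C * d ^ (-α)) := by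
    rw [Real.mul_rpow (by norm_num) hd0.le, Real.rpow_add hd0, Real.rpow_natCast, c0,
      Real.rpow_neg hd0.le, div_pow, div_pow, one_pow]
    field_simp
  rw [hcc] at hmp
  have hWx : W x < 0 := hneg
  have h1 := tangent hq (hvpos (rho e l x)) (hvpos x)
  have h2 : u (rho e l x) ^ p ≤ u x ^ p :=
    Real.rpow_le_rpow (hupos _).le (by linarith) (by linarith)
  have h3 : 0 ≤ κ * (u x ^ p - u (rho e l x) ^ p) := mul_nonneg hκ.le (by linarith)
  have h4 : q * v x ^ (q - 1) * W x ≤ q * v x ^ (q - 1) * (v (rho e l x) - v x) :=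
    mul_le_mul_of_nonneg_left hUV (by have := hvpos x; positivity)
  have h5 : q * v x ^ (q - 1) * W x ≤ c0 n α C * d ^ (-α) * W x := by
    linarith
  exact (mul_le_mul_right_of_neg hWx).1 h5

lemma strong_max [NeZero n] {α C p q κ : ℝ} (hα : 0 < α) (hC : 0 < C) (hq : 1 ≤ q)
    {e : EuclideanSpace ℝ (Fin n)} (he : ‖e‖ = 1) (l : ℝ)
    {u v : EuclideanSpace ℝ (Fin n) → ℝ} (hu : Continuous u) {M : ℝ} (hM : ∀ y, |u y| ≤ M)
    (hvpos : ∀ x, 0 < v x)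
    (hequ : IsFracLap n α C u (fun x => v x ^ q - κ * u x ^ p))
    {x : EuclideanSpace ℝ (Fin n)} (hx : inner ℝ e x < l)
    (hzero : u (rho e l x) - u x = 0) (hV : 0 ≤ v (rho e l x) - v x)
    (hmin : ∀ y, inner ℝ e y ≤ l → 0 ≤ u (rho e l y) - u y) :
    ∀ y, inner ℝ e y < l → u (rho e l y) - u y = 0 := by
  have hF := fraclap_diff hα he l hu hM hequ x
  set W : EuclideanSpace ℝ (Fin n) → ℝ := fun y => u (rho e l y) - u y with hW
  have hρ := continuous_rho e l
  have hWc : Continuous W := by fun_prop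
  intro y0 hy0
  by_contra hne
  have hWy0 : 0 < W y0 := lt_of_le_of_ne (hmin y0 hy0.le) (Ne.symm hne)
  have hxy : x ≠ y0 := by
    rintro rfl
    exact hne hzero
  have hd0 : 0 < dist x y0 := dist_pos.2 hxy
  have hd1 : dist x y0 < dist x (rho e l y0) := by
    have := dist_sq_rho he l x y0
    have h3 : 0 < (l - inner ℝ e x) * (l - inner ℝ e y0) :=
      mul_pos (by linarith) (by linarith)
    exact (pow_lt_pow_iff_left₀ dist_nonneg dist_nonneg two_ne_zero).1 (by nlinarith)
  have ha0 : 0 < (n : ℝ) + α := by positivity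
  set φ : EuclideanSpace ℝ (Fin n) → ℝ := fun y => W y * (1 / dist x y ^ ((n : ℝ) + α)
      - 1 / dist x (rho e l y) ^ ((n : ℝ) + α)) with hφ
  have hφ0 : 0 < φ y0 := by
    apply mul_pos hWy0
    rw [sub_pos]
    apply one_div_lt_one_div_of_lt (by positivity)
    exact Real.rpow_lt_rpow hd0.le hd1 ha0
  have hφc : ContinuousAt φ y0 := by
    have hd2 : 0 < dist x (rho e l y0) := hd0.trans hd1
    have c1 : ContinuousAt (fun y => dist x y ^ ((n : ℝ) + α)) y0 :=
      ContinuousAt.rpow_const (by fun_prop) (Or.inl hd0.ne')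
    have c2 : ContinuousAt (fun y => dist x (rho e l y) ^ ((n : ℝ) + α)) y0 :=
      ContinuousAt.rpow_const (by fun_prop) (Or.inl hd2.ne')
    exact hWc.continuousAt.mul ((continuousAt_const.div c1 (by positivity)).sub
      (continuousAt_const.div c2 (by positivity)))
  have ev : ∀ᶠ y in nhds y0, φ y0 / 2 < φ y ∧ inner ℝ e y < l ∧ dist x y0 / 2 < dist x y := by
    refine (hφc.eventually_const_lt (by linarith)).and
      (((by fun_prop : Continuous (fun y => inner ℝ e y)).continuousAt.eventually_lt_const hy0).and
      ((by fun_prop : Continuous (fun y => dist x y)).continuousAt.eventually_const_lt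
        (by linarith)))
  obtain ⟨δ, hδ, hball⟩ := Metric.eventually_nhds_iff_ball.1 ev
  have hmp := max_principle hα hC he l hWc (abs_diff_le hM · _) (by
      intro y; simp only [hW, rho_rho he]; ring) hF hx hzero.le
      (by intro y hy; have := hmin y hy; show W x ≤ W y; rw [show W x = 0 from hzero]; exact this)
      (B := Metric.ball y0 δ) Metric.isOpen_ball.measurableSet measure_ball_lt_top.ne
      (fun y hy => (hball y hy).2.1)
      (half_pos hd0) (fun y hy => (hball y hy).2.2.le) (h := φ y0 / 2) (by
      intro y hy
      rw [show W x = 0 from hzero]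
      have := (hball y hy).1.le
      rw [sub_zero, mul_zero, zero_div, sub_zero]
      exact this)
  have hvol : 0 < volume.real (Metric.ball y0 δ) :=
    ENNReal.toReal_pos (Metric.measure_ball_pos _ _ hδ).ne' measure_ball_lt_top.ne
  have h1 : v x ^ q ≤ v (rho e l x) ^ q :=
    Real.rpow_le_rpow (hvpos _).le (by linarith) (by linarith)
  have h2 : u (rho e l x) = u x := by linarith
  rw [h2] at hmp
  have : 0 < C * (φ y0 / 2) * volume.real (Metric.ball y0 δ) := by positivity
  linarith

end MP

namespace MP
variable {n : ℕ}

structure Sys (n : ℕ) (α C q p s κ₁ κ₂ M : ℝ) (u v : EuclideanSpace ℝ (Fin n) → ℝ) : Prop where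
  hα : 0 < α
  hC : 0 < C
  hq : 1 < q
  hp : 1 < p
  hs : 1 < s
  hκ₁ : 0 < κ₁
  hκ₂ : 0 < κ₂
  huc : Continuous u
  hvc : Continuous v
  hupos : ∀ x, 0 < u x
  hvpos : ∀ x, 0 < v x
  hMu : ∀ x, u x ≤ M
  hMv : ∀ x, v x ≤ M
  hequ : IsFracLap n α C u (fun x => v x ^ q - κ₁ * u x ^ p)
  heqv : IsFracLap n α C v (fun x => u x ^ q - κ₂ * v x ^ s)
  hu0 : Tendsto u (cocompact _) (nhds 0)
  hv0 : Tendsto v (cocompact _) (nhds 0)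
  hdec : ∃ R, ∀ x, R < ‖x‖ → u x ^ (q - 1) ≤ ‖x‖ ^ (-(2 * α)) ∧ v x ^ (q - 1) ≤ ‖x‖ ^ (-(2 * α))

variable {α C q p s κ₁ κ₂ M : ℝ} {u v : EuclideanSpace ℝ (Fin n) → ℝ}

lemma Sys.symm (S : Sys n α C q p s κ₁ κ₂ M u v) : Sys n α C q s p κ₂ κ₁ M v u where
  hα := S.hα
  hC := S.hC
  hq := S.hq
  hp := S.hs
  hs := S.hp
  hκ₁ := S.hκ₂
  hκ₂ := S.hκ₁
  huc := S.hvc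
  hvc := S.huc
  hupos := S.hvpos
  hvpos := S.hupos
  hMu := S.hMv
  hMv := S.hMu
  hequ := S.heqv
  heqv := S.hequ
  hu0 := S.hv0
  hv0 := S.hu0
  hdec := let ⟨R, h⟩ := S.hdec; ⟨R, fun x hx => (h x hx).symm⟩

lemma Sys.abs_le (S : Sys n α C q p s κ₁ κ₂ M u v) (x) : |u x| ≤ M := by
  rw [abs_of_pos (S.hupos x)]; exact S.hMu x

/-- joint minimum of the two differences -/
noncomputable def ff (u v : EuclideanSpace ℝ (Fin n) → ℝ) (e : EuclideanSpace ℝ (Fin n)) (l : ℝ)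
    (x : EuclideanSpace ℝ (Fin n)) : ℝ :=
  min (u (rho e l x) - u x) (v (rho e l x) - v x)

def NegMin (u v : EuclideanSpace ℝ (Fin n) → ℝ) (e : EuclideanSpace ℝ (Fin n)) (l : ℝ)
    (x : EuclideanSpace ℝ (Fin n)) : Prop :=
  inner ℝ e x < l ∧ ff u v e l x < 0 ∧ ∀ y, inner ℝ e y ≤ l → ff u v e l x ≤ ff u v e l y

lemma continuous_ff (S : Sys n α C q p s κ₁ κ₂ M u v) (e : EuclideanSpace ℝ (Fin n)) :
    Continuous (fun z : ℝ × EuclideanSpace ℝ (Fin n) => ff u v e z.1 z.2) := by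
  have h := continuous_rho2 e
  have h1 := S.huc
  have h2 := S.hvc
  have h3 := h1.comp h
  have h4 := h2.comp h
  unfold ff
  exact (h3.sub (h1.comp continuous_snd)).min (h4.sub (h2.comp continuous_snd))

lemma tendsto_ff (S : Sys n α C q p s κ₁ κ₂ M u v) (e : EuclideanSpace ℝ (Fin n))
    {a : ℕ → ℝ} {b : ℕ → EuclideanSpace ℝ (Fin n)} {l : ℝ} {z : EuclideanSpace ℝ (Fin n)}
    (ha : Tendsto a atTop (nhds l)) (hb : Tendsto b atTop (nhds z)) :
    Tendsto (fun k => ff u v e (a k) (b k)) atTop (nhds (ff u v e l z)) := by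
  have hr : Tendsto (fun k => rho e (a k) (b k)) atTop (nhds (rho e l z)) := by
    unfold rho
    exact hb.add (((ha.sub (Tendsto.inner tendsto_const_nhds hb)).const_mul 2).smul
      tendsto_const_nhds)
  have h1 : Tendsto (fun k => u (rho e (a k) (b k))) atTop (nhds (u (rho e l z))) :=
    (S.huc.tendsto _).comp hr
  have h2 : Tendsto (fun k => v (rho e (a k) (b k))) atTop (nhds (v (rho e l z))) :=
    (S.hvc.tendsto _).comp hr
  have h3 : Tendsto (fun k => u (b k)) atTop (nhds (u z)) := (S.huc.tendsto _).comp hb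
  have h4 : Tendsto (fun k => v (b k)) atTop (nhds (v z)) := (S.hvc.tendsto _).comp hb
  unfold ff
  exact (h1.sub h3).min (h2.sub h4)

lemma rho_of_eq {e : EuclideanSpace ℝ (Fin n)} {l : ℝ} {x} (h : inner ℝ e x = l) :
    rho e l x = x := by
  simp [rho, h]

lemma exists_negMin (S : Sys n α C q p s κ₁ κ₂ M u v) {e : EuclideanSpace ℝ (Fin n)} {l : ℝ}
    {x₁ : EuclideanSpace ℝ (Fin n)} (h1 : inner ℝ e x₁ < l) (h2 : ff u v e l x₁ < 0) :
    ∃ x, NegMin u v e l x := by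
  have hc : Continuous (ff u v e l) :=
    (continuous_ff S e).comp (by fun_prop : Continuous (fun x => (l, x)))
  have hcl : IsClosed {y : EuclideanSpace ℝ (Fin n) | inner ℝ e y ≤ l} :=
    isClosed_le (by fun_prop) continuous_const
  obtain ⟨x, hx, hmin⟩ := hc.continuousOn.exists_isMinOn' hcl (x₀ := x₁) h1.le (by
    apply Filter.Eventually.filter_mono inf_le_left
    filter_upwards [S.hu0.eventually_lt_const (u := - ff u v e l x₁) (by linarith),
      S.hv0.eventually_lt_const (u := - ff u v e l x₁) (by linarith)] with y a b
    have := S.hupos (rho e l y)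
    have := S.hvpos (rho e l y)
    apply le_min <;> linarith)
  have hm : ff u v e l x ≤ ff u v e l x₁ := hmin h1.le
  refine ⟨x, lt_of_le_of_ne hx ?_, by linarith, fun y hy => hmin hy⟩
  intro hxe
  have : ff u v e l x = 0 := by simp [ff, rho_of_eq hxe]
  linarith

lemma negMin_bound [NeZero n] (S : Sys n α C q p s κ₁ κ₂ M u v) {e : EuclideanSpace ℝ (Fin n)}
    (he : ‖e‖ = 1) {l : ℝ} {x : EuclideanSpace ℝ (Fin n)} (h : NegMin u v e l x) :
    c0 n α C * (l - inner ℝ e x) ^ (-α) ≤ q * u x ^ (q - 1) ∨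
    c0 n α C * (l - inner ℝ e x) ^ (-α) ≤ q * v x ^ (q - 1) := by
  obtain ⟨h1, h2, h3⟩ := h
  rcases le_total (u (rho e l x) - u x) (v (rho e l x) - v x) with h | h
  · right
    have h0 : ff u v e l x = u (rho e l x) - u x := min_eq_left h
    rw [h0] at h2 h3
    exact neg_min_bound S.hα S.hC S.hp S.hq.le S.hκ₁ he l S.huc S.abs_le S.hupos S.hvpos S.hequ h1
      h2 h (fun y hy => (h3 y hy).trans (min_le_left _ _))
  · left
    have h0 : ff u v e l x = v (rho e l x) - v x := min_eq_right h
    rw [h0] at h2 h3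
    exact neg_min_bound S.hα S.hC S.hs S.hq.le S.hκ₂ he l S.hvc S.symm.abs_le S.hvpos S.hupos
      S.heqv h1 h2 h (fun y hy => (h3 y hy).trans (min_le_right _ _))

lemma far [NeZero n] (S : Sys n α C q p s κ₁ κ₂ M u v) :
    ∃ R₀ : ℝ, 0 < R₀ ∧ ∀ (e : EuclideanSpace ℝ (Fin n)) (l : ℝ) (x : EuclideanSpace ℝ (Fin n)),
      ‖e‖ = 1 → NegMin u v e l x → R₀ < ‖x‖ → |l| ≤ ‖x‖ → False := by
  obtain ⟨R, hR⟩ := S.hdec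
  have hc := c0_pos (n := n) (α := α) S.hC
  have hq := S.hq
  have hα := S.hα
  refine ⟨max (max R 1) ((q * 2 ^ α / c0 n α C) ^ (1 / α)), by positivity, ?_⟩
  intro e l x he hm hx hl
  have hx1 : 1 < ‖x‖ := ((le_max_right _ _).trans (le_max_left _ _)).trans_lt hx
  have hxR : R < ‖x‖ := ((le_max_left _ _).trans (le_max_left _ _)).trans_lt hx
  have hx2 := (le_max_right _ _).trans_lt hx
  have hX : 0 < ‖x‖ := by linarith
  have hd0 : 0 < l - inner ℝ e x := by linarith [hm.1]
  have hd : l - inner ℝ e x ≤ 2 * ‖x‖ := by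
    have h1 := abs_real_inner_le_norm e x
    rw [he, one_mul] at h1
    linarith [neg_le_of_abs_le h1, le_of_abs_le hl]
  have b1 : c0 n α C * (l - inner ℝ e x) ^ (-α) ≤ q * ‖x‖ ^ (-(2 * α)) := by
    obtain ⟨d1, d2⟩ := hR x hxR
    rcases negMin_bound S he hm with h | h
    · exact h.trans (mul_le_mul_of_nonneg_left d1 (by linarith))
    · exact h.trans (mul_le_mul_of_nonneg_left d2 (by linarith))
  have b2 : (2 * ‖x‖) ^ (-α) ≤ (l - inner ℝ e x) ^ (-α) :=
    Real.rpow_le_rpow_of_nonpos hd0 hd (by linarith)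
  have b3 : c0 n α C * (2 * ‖x‖) ^ (-α) ≤ q * ‖x‖ ^ (-(2 * α)) :=
    (mul_le_mul_of_nonneg_left b2 hc.le).trans b1
  have b4 : q * 2 ^ α / c0 n α C < ‖x‖ ^ α := by
    have := Real.rpow_lt_rpow (by positivity) hx2 hα
    rwa [← Real.rpow_mul (by positivity), one_div_mul_cancel hα.ne', Real.rpow_one] at this
  rw [div_lt_iff₀ hc] at b4
  rw [Real.rpow_neg (by positivity), Real.rpow_neg hX.le, Real.mul_rpow (by norm_num) hX.le,
    two_mul α, Real.rpow_add hX, ← div_eq_mul_inv, ← div_eq_mul_inv,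
    div_le_div_iff₀ (by positivity) (by positivity)] at b3
  have hP : 0 < ‖x‖ ^ α := by positivity
  nlinarith

lemma near [NeZero n] (S : Sys n α C q p s κ₁ κ₂ M u v) :
    ∃ δ : ℝ, 0 < δ ∧ ∀ (e : EuclideanSpace ℝ (Fin n)) (l : ℝ) (x : EuclideanSpace ℝ (Fin n)),
      ‖e‖ = 1 → NegMin u v e l x → δ ≤ l - inner ℝ e x := by
  have hc := c0_pos (n := n) (α := α) S.hC
  have hq := S.hq
  have hα := S.hα
  have hM : 0 < M := (S.hupos 0).trans_le (S.hMu 0)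
  set K := q * M ^ (q - 1) with hK
  have hK0 : 0 < K := by positivity
  refine ⟨(c0 n α C / K) ^ (1 / α), by positivity, ?_⟩
  intro e l x he hm
  have hd0 : 0 < l - inner ℝ e x := by linarith [hm.1]
  by_contra! hlt
  have b1 : c0 n α C * (l - inner ℝ e x) ^ (-α) ≤ K := by
    rcases negMin_bound S he hm with h | h
    · exact h.trans (mul_le_mul_of_nonneg_left
        (Real.rpow_le_rpow (S.hupos x).le (S.hMu x) (by linarith)) (by linarith))
    · exact h.trans (mul_le_mul_of_nonneg_left
        (Real.rpow_le_rpow (S.hvpos x).le (S.hMv x) (by linarith)) (by linarith))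
  have b4 := Real.rpow_lt_rpow hd0.le hlt hα
  rw [← Real.rpow_mul (by positivity), one_div_mul_cancel hα.ne', Real.rpow_one,
    lt_div_iff₀ hK0] at b4
  rw [Real.rpow_neg hd0.le, ← div_eq_mul_inv, div_le_iff₀ (by positivity)] at b1
  linarith

lemma all_of_half {e : EuclideanSpace ℝ (Fin n)} (he : ‖e‖ = 1) {l : ℝ}
    (h : ∀ y, inner ℝ e y < l → u (rho e l y) - u y = 0) (y) : u (rho e l y) = u y := by
  rcases lt_trichotomy (inner ℝ e y) l with hy | hy | hy
  · linarith [h y hy]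
  · rw [rho_of_eq hy]
  · have := h (rho e l y) (by rw [inner_rho he]; linarith)
    rw [rho_rho he] at this
    linarith

lemma touch [NeZero n] (S : Sys n α C q p s κ₁ κ₂ M u v) {e : EuclideanSpace ℝ (Fin n)}
    (he : ‖e‖ = 1) {l : ℝ} (hP : ∀ y, inner ℝ e y ≤ l → 0 ≤ ff u v e l y)
    {x : EuclideanSpace ℝ (Fin n)} (hx : inner ℝ e x < l) (hz : u (rho e l x) - u x = 0) :
    ∀ y, u (rho e l y) = u y ∧ v (rho e l y) = v y := by
  have hU : ∀ y, inner ℝ e y ≤ l → 0 ≤ u (rho e l y) - u y :=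
    fun y hy => (hP y hy).trans (min_le_left _ _)
  have hV : ∀ y, inner ℝ e y ≤ l → 0 ≤ v (rho e l y) - v y :=
    fun y hy => (hP y hy).trans (min_le_right _ _)
  have h1 := all_of_half he (strong_max S.hα S.hC S.hq.le he l S.huc S.abs_le S.hvpos S.hequ hx hz
    (hV x hx.le) hU)
  have h2 := fraclap_diff S.hα he l S.huc S.abs_le S.hequ x
  simp only [h1, sub_self, zero_div, integral_zero, mul_zero] at h2
  have h3 := tendsto_nhds_unique h2 tendsto_const_nhds
  have h4 : v (rho e l x) ^ q = v x ^ q := by linarith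
  have h5 : v (rho e l x) = v x :=
    (Real.rpow_left_inj (S.hvpos _).le (S.hvpos _).le (by linarith [S.hq])).1 h4
  have h6 := all_of_half he (strong_max S.hα S.hC S.hq.le he l S.hvc S.symm.abs_le S.hupos S.heqv
    hx (by linarith) (hU x hx.le) hV)
  exact fun y => ⟨h1 y, h6 y⟩

lemma ff_comm (e : EuclideanSpace ℝ (Fin n)) (l : ℝ) (x) : ff v u e l x = ff u v e l x :=
  min_comm _ _

lemma tendsto_line {e : EuclideanSpace ℝ (Fin n)} (he : ‖e‖ = 1) :
    Tendsto (fun t : ℝ => t • e) atTop (cocompact _) := by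
  rw [← Metric.cobounded_eq_cocompact, ← tendsto_norm_atTop_iff_cobounded]
  simp only [norm_smul, he, mul_one]
  exact tendsto_norm_atTop_atTop

lemma plane [NeZero n] (S : Sys n α C q p s κ₁ κ₂ M u v) {e : EuclideanSpace ℝ (Fin n)}
    (he : ‖e‖ = 1) : ∃ l, ∀ y, u (rho e l y) = u y ∧ v (rho e l y) = v y := by
  obtain ⟨R₀, hR0, hfar⟩ := far S
  obtain ⟨δ, hδ, hnear⟩ := near S
  set A : Set ℝ := {l | ∀ y, inner ℝ e y < l → 0 ≤ ff u v e l y} with hA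
  have hneg : ∀ l, l ∉ A → ∃ x, NegMin u v e l x := by
    intro l hl
    simp only [hA, mem_ofPred_eq] at hl
    push Not at hl
    obtain ⟨y, h1, h2⟩ := hl
    exact exists_negMin S h1 h2
  have hin : ∀ x : EuclideanSpace ℝ (Fin n), |inner ℝ e x| ≤ ‖x‖ := fun x => by
    have h1 := abs_real_inner_le_norm e x
    rwa [he, one_mul] at h1
  have hne : A.Nonempty := by
    refine ⟨-R₀, ?_⟩
    by_contra hl
    obtain ⟨x, hx⟩ := hneg _ hl
    have h1 := neg_le_of_abs_le (hin x)
    have h2 := hx.1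
    refine hfar e _ x he hx (by linarith) ?_
    rw [abs_neg, abs_of_pos hR0]; linarith
  have hbdd : BddAbove A := by
    have h1 : Tendsto (fun t : ℝ => u ((2 * t) • e)) atTop (nhds 0) :=
      S.hu0.comp ((tendsto_line he).comp (tendsto_id.const_mul_atTop two_pos))
    have h2 := (h1.eventually_lt_const (S.hupos 0)).and (eventually_gt_atTop 0)
    obtain ⟨T, hT⟩ := eventually_atTop.1 h2
    refine ⟨T, fun l hl => ?_⟩
    by_contra! hlt
    obtain ⟨h3, h4⟩ := hT l hlt.le
    have h5 := (hl 0 (by simpa using h4)).trans (min_le_left _ _)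
    have h6 : rho e l 0 = (2 * l) • e := by simp [rho]
    rw [h6] at h5
    linarith
  obtain ⟨l₀, hl0⟩ : ∃ l, l = sSup A := ⟨_, rfl⟩
  have hP : ∀ y, inner ℝ e y ≤ l₀ → 0 ≤ ff u v e l₀ y := by
    intro y hy
    rcases hy.eq_or_lt with hy | hy
    · simp [ff, rho_of_eq hy]
    obtain ⟨w, -, hw, hwA⟩ := exists_seq_tendsto_sSup hne hbdd
    rw [← hl0] at hw
    have h1 : Tendsto (fun k => ff u v e (w k) y) atTop (nhds (ff u v e l₀ y)) :=
      tendsto_ff S e hw tendsto_const_nhds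
    refine ge_of_tendsto h1 ?_
    filter_upwards [hw.eventually_const_lt hy] with k hk
    exact hwA k y hk
  -- negative minima just beyond
  have hseq : ∀ k : ℕ, ∃ x, NegMin u v e (l₀ + 1 / ((k : ℝ) + 1)) x := by
    intro k
    apply hneg
    intro hc
    have := le_csSup hbdd hc
    rw [← hl0] at this
    have h2 : 0 < 1 / ((k : ℝ) + 1) := by positivity
    linarith
  choose x hx using hseq
  have hbound : ∀ k, x k ∈ Metric.closedBall (0 : EuclideanSpace ℝ (Fin n)) (max R₀ (|l₀| + 1)) := by
    intro k
    rw [mem_closedBall_zero_iff]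
    by_contra! hc
    have h1 := (le_max_left _ _).trans_lt hc
    have h2 := (le_max_right _ _).trans_lt hc
    refine hfar e _ _ he (hx k) h1 (le_trans ?_ h2.le)
    refine (abs_add_le _ _).trans ?_
    have h3 : (0 : ℝ) < (k : ℝ) + 1 := by positivity
    have : |1 / ((k : ℝ) + 1)| ≤ 1 := by
      rw [abs_of_pos (by positivity), div_le_one h3]
      have : (0 : ℝ) ≤ k := by positivity
      linarith
    linarith
  obtain ⟨z, -, φ, hφ, hz⟩ := (isCompact_closedBall _ _).tendsto_subseq hbound
  have hlk : Tendsto (fun k => l₀ + 1 / (((φ k : ℕ) : ℝ) + 1)) atTop (nhds l₀) := by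
    have := (tendsto_one_div_add_atTop_nhds_zero_nat (𝕜 := ℝ)).comp hφ.tendsto_atTop
    simpa using this.const_add l₀
  have hfz : ff u v e l₀ z ≤ 0 := by
    have h1 : Tendsto (fun k => ff u v e (l₀ + 1 / (((φ k : ℕ) : ℝ) + 1)) (x (φ k))) atTop
      (nhds (ff u v e l₀ z)) := tendsto_ff S e hlk hz
    exact le_of_tendsto h1 (Eventually.of_forall fun k => (hx (φ k)).2.1.le)
  have hdz : δ ≤ l₀ - inner ℝ e z := by
    have hi : Continuous (fun y : EuclideanSpace ℝ (Fin n) => (inner ℝ e y : ℝ)) := by fun_prop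
    have h1 := hlk.sub ((hi.tendsto z).comp hz)
    exact ge_of_tendsto h1 (Eventually.of_forall fun k => hnear e _ _ he (hx (φ k)))
  have hz1 : inner ℝ e z < l₀ := by linarith
  have hf0 := le_antisymm hfz (hP z hz1.le)
  refine ⟨l₀, ?_⟩
  rcases min_choice (u (rho e l₀ z) - u z) (v (rho e l₀ z) - v z) with h | h
  · exact touch S he hP hz1 (by rw [← h]; exact hf0)
  · have := touch S.symm he (l := l₀) (by simpa only [ff_comm] using hP) hz1
      (by rw [← h]; exact hf0)
    exact fun y => (this y).symm

lemma point_refl {w : EuclideanSpace ℝ (Fin n) → ℝ} {L : Fin n → ℝ}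
    (h : ∀ i y, w (rho (EuclideanSpace.single i 1) (L i) y) = w y) (y) :
    w ((2 : ℝ) • WithLp.toLp 2 L - y) = w y := by
  have key : ∀ T : Finset (Fin n),
      w (WithLp.toLp 2 (fun i => if i ∈ T then 2 * L i - y i else y i)) = w y := by
    intro T
    induction T using Finset.induction_on with
    | empty => simp
    | insert a T ha ih =>
      rw [← ih, ← h a]
      congr 1
      ext j
      by_cases hj : j = a
      · subst hj
        simp [rho, ha, EuclideanSpace.inner_single_left]
        try ring
      · simp [rho, hj]
  have := key Finset.univ
  rw [← this]
  congr 1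
  ext j
  simp

lemma center {w : EuclideanSpace ℝ (Fin n) → ℝ} (hpos : ∀ x, 0 < w x)
    (h0 : Tendsto w (cocompact _) (nhds 0)) {x₀ : EuclideanSpace ℝ (Fin n)}
    (hpt : ∀ y, w ((2 : ℝ) • x₀ - y) = w y) {e : EuclideanSpace ℝ (Fin n)} (he : ‖e‖ = 1) {l : ℝ}
    (h : ∀ y, w (rho e l y) = w y) : l = inner ℝ e x₀ := by
  by_contra hne
  set t := 4 * (inner ℝ e x₀ - l) with ht
  have ht0 : t ≠ 0 := by
    intro h; apply hne; linarith
  have hper : ∀ y, w (y + t • e) = w y := by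
    intro y
    have h1 : (2 : ℝ) • x₀ - rho e l ((2 : ℝ) • x₀ - rho e l y) = y + t • e := by
      have h2 : inner ℝ e ((2 : ℝ) • x₀ - rho e l y) = 2 * inner ℝ e x₀ - (2 * l - inner ℝ e y) := by
        rw [inner_sub_right, inner_rho he, inner_smul_right]
      conv_lhs => rw [rho, h2, rho]
      rw [ht]
      module
    rw [← h1, hpt, h, hpt, h]
  have hk : ∀ k : ℕ, w (((k : ℝ) * t) • e) = w 0 := by
    intro k
    induction k with
    | zero => simp
    | succ k ih =>
      rw [← ih, ← hper ((↑k * t) • e)]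
      congr 1
      push_cast
      module
  have h1 : Tendsto (fun k : ℕ => ((k : ℝ) * t) • e) atTop (cocompact _) := by
    rw [← Metric.cobounded_eq_cocompact, ← tendsto_norm_atTop_iff_cobounded]
    simp only [norm_smul, he, mul_one, norm_mul, Real.norm_natCast]
    exact tendsto_natCast_atTop_atTop.atTop_mul_const (norm_pos_iff.2 ht0)
  have h2 := h0.comp h1
  have h3 : (w ∘ fun k : ℕ => ((k : ℝ) * t) • e) = fun _ => w 0 := funext hk
  rw [h3] at h2
  have := tendsto_nhds_unique h2 tendsto_const_nhds
  linarith [hpos 0]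

lemma rho_swap {x₀ x y : EuclideanSpace ℝ (Fin n)} (hxy : x ≠ y) (h : ‖x - x₀‖ = ‖y - x₀‖) :
    rho (‖x - y‖⁻¹ • (x - y)) (inner ℝ (‖x - y‖⁻¹ • (x - y)) x₀) x = y := by
  have hN : ‖x - y‖ ≠ 0 := norm_ne_zero_iff.2 (sub_ne_zero.2 hxy)
  have h1 : 2 * inner ℝ (x - y) (x₀ - x) = - ‖x - y‖ ^ 2 := by
    have h2 := norm_sub_sq_real (x - y) (x - x₀)
    have h3 : x - y - (x - x₀) = -(y - x₀) := by abel
    rw [h3, norm_neg, h] at h2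
    have h4 : x₀ - x = - (x - x₀) := by abel
    rw [h4, inner_neg_right]
    linarith
  rw [rho, ← inner_sub_right, real_inner_smul_left, smul_smul]
  have h5 : 2 * (‖x - y‖⁻¹ * inner ℝ (x - y) (x₀ - x)) * ‖x - y‖⁻¹ = -1 := by
    have : 2 * (‖x - y‖⁻¹ * inner ℝ (x - y) (x₀ - x)) * ‖x - y‖⁻¹ =
      (2 * inner ℝ (x - y) (x₀ - x)) * ‖x - y‖⁻¹ ^ 2 := by ring
    rw [this, h1]
    field_simp
  rw [h5]
  module

lemma conclude [NeZero n] (S : Sys n α C q p s κ₁ κ₂ M u v) :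
    ∃ x₀ : EuclideanSpace ℝ (Fin n), ∀ x y : EuclideanSpace ℝ (Fin n),
      ‖x - x₀‖ = ‖y - x₀‖ → u x = u y ∧ v x = v y := by
  have hpl : ∀ i : Fin n, ∃ l, ∀ y, u (rho (EuclideanSpace.single i 1) l y) = u y ∧
      v (rho (EuclideanSpace.single i 1) l y) = v y := fun i => plane S (by simp)
  choose L hL using hpl
  refine ⟨WithLp.toLp 2 L, fun x y hxy => ?_⟩
  by_cases hne : x = y
  · simp [hne]
  set e := ‖x - y‖⁻¹ • (x - y) with he
  have he1 : ‖e‖ = 1 := by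
    have hN : ‖x - y‖ ≠ 0 := norm_ne_zero_iff.2 (sub_ne_zero.2 hne)
    rw [he, norm_smul, norm_inv, norm_norm, inv_mul_cancel₀ hN]
  obtain ⟨l, hl⟩ := plane S he1
  have h1 := center S.hupos S.hu0 (point_refl (fun i y => (hL i y).1)) he1 (fun y => (hl y).1)
  have h2 := rho_swap hne hxy
  rw [← he, ← h1] at h2
  have h3 := hl x
  rw [h2] at h3
  exact ⟨h3.1.symm, h3.2.symm⟩

lemma decay_tendsto {b R : ℝ} (hb : 0 < b) (hpos : ∀ x, 0 < u x)
    (h : ∀ x, R < ‖x‖ → u x ≤ ‖x‖ ^ (-b)) : Tendsto u (cocompact _) (nhds 0) := by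
  have h1 : Tendsto (fun x : EuclideanSpace ℝ (Fin n) => ‖x‖ ^ (-b)) (cocompact _) (nhds 0) :=
    (tendsto_rpow_neg_atTop hb).comp (tendsto_norm_cocompact_atTop)
  refine squeeze_zero' (Eventually.of_forall fun x => (hpos x).le) ?_ h1
  filter_upwards [(tendsto_norm_cocompact_atTop).eventually_gt_atTop R] with x hx
  exact h x hx

lemma decay_bdd (hc : Continuous u) (hpos : ∀ x, 0 < u x)
    (h : Tendsto u (cocompact _) (nhds 0)) : ∃ M, ∀ x, u x ≤ M := by
  obtain ⟨x, hx⟩ := hc.exists_forall_ge' 0 ((h.eventually_lt_const (hpos 0)).mono fun _ h => h.le)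
  exact ⟨_, hx⟩

lemma decay_pow {b R c : ℝ} (hc : 0 ≤ c) (hpos : ∀ x, 0 < u x)
    (h : ∀ x, R < ‖x‖ → u x ≤ ‖x‖ ^ (-b)) (x) (hx : R < ‖x‖) : u x ^ c ≤ ‖x‖ ^ (-(b * c)) := by
  have := Real.rpow_le_rpow (hpos x).le (h x hx) hc
  rwa [← Real.rpow_mul (norm_nonneg _), neg_mul] at this

end MP

/-- Radial symmetry for the critical system with absorption (Corollary 1.2):
`(−Δ)^{α/2}u = v^{(n+α)/(n−α)} − κ₁ u^p`, `(−Δ)^{α/2}v = u^{(n+α)/(n−α)} − κ₂ v^s`. -/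
theorem radial_symmetry_critical_absorption {n : ℕ} [NeZero n] (α C p s κ₁ κ₂ : ℝ)
    (hα : α ∈ Ioo (0 : ℝ) 2) (hnα : α < (n : ℝ)) (hC : 0 < C)
    (hp : 1 < p) (hs : 1 < s) (hκ₁ : 0 < κ₁) (hκ₂ : 0 < κ₂)
    (u v : EuclideanSpace ℝ (Fin n) → ℝ)
    (hupos : ∀ x, 0 < u x) (hvpos : ∀ x, 0 < v x)
    (huL : MemLalpha n α u) (hvL : MemLalpha n α v)
    (huC : C11loc u) (hvC : C11loc v)
    (hequ : IsFracLap n α C u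
      (fun x => v x ^ (((n : ℝ) + α) / ((n : ℝ) - α)) - κ₁ * u x ^ p))
    (heqv : IsFracLap n α C v
      (fun x => u x ^ (((n : ℝ) + α) / ((n : ℝ) - α)) - κ₂ * v x ^ s))
    (hdecu : ∃ R : ℝ, ∀ x, R < ‖x‖ → u x ≤ ‖x‖ ^ (-((n : ℝ) - α)))
    (hdecv : ∃ R : ℝ, ∀ x, R < ‖x‖ → v x ≤ ‖x‖ ^ (-((n : ℝ) - α))) :
    ∃ x₀ : EuclideanSpace ℝ (Fin n), ∀ x y : EuclideanSpace ℝ (Fin n),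
      ‖x - x₀‖ = ‖y - x₀‖ → u x = u y ∧ v x = v y := by
  obtain ⟨hα0, hα2⟩ := hα
  have hb : 0 < (n : ℝ) - α := by linarith
  obtain ⟨R₁, hR₁⟩ := hdecu
  obtain ⟨R₂, hR₂⟩ := hdecv
  have hu0 := MP.decay_tendsto hb hupos hR₁
  have hv0 := MP.decay_tendsto hb hvpos hR₂
  obtain ⟨M₁, hM₁⟩ := MP.decay_bdd huC.1.continuous hupos hu0
  obtain ⟨M₂, hM₂⟩ := MP.decay_bdd hvC.1.continuous hvpos hv0
  have hq1 : ((n : ℝ) + α) / ((n : ℝ) - α) - 1 = 2 * α / ((n : ℝ) - α) := by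
    field_simp; ring
  have hq : 1 < ((n : ℝ) + α) / ((n : ℝ) - α) := by
    rw [lt_div_iff₀ hb]; linarith
  have hbq : ((n : ℝ) - α) * (((n : ℝ) + α) / ((n : ℝ) - α) - 1) = 2 * α := by
    rw [hq1]; field_simp
  have S : MP.Sys n α C (((n : ℝ) + α) / ((n : ℝ) - α)) p s κ₁ κ₂ (max M₁ M₂) u v :=
    { hα := hα0, hC := hC, hq := hq, hp := hp, hs := hs, hκ₁ := hκ₁, hκ₂ := hκ₂
      huc := huC.1.continuous, hvc := hvC.1.continuous, hupos := hupos, hvpos := hvpos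
      hMu := fun x => (hM₁ x).trans (le_max_left _ _)
      hMv := fun x => (hM₂ x).trans (le_max_right _ _)
      hequ := hequ, heqv := heqv, hu0 := hu0, hv0 := hv0
      hdec := by
        refine ⟨max R₁ R₂, fun x hx => ?_⟩
        rw [← hbq]
        exact ⟨MP.decay_pow (by linarith) hupos hR₁ x ((le_max_left _ _).trans_lt hx),
          MP.decay_pow (by linarith) hvpos hR₂ x ((le_max_right _ _).trans_lt hx)⟩ }
  exact MP.conclude S
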